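/- arXiv:2501.11636 — 3 statements merged into one kernel-verified Lean document; each statement's English description precedes it below -/
import Mathlib

section
/- Let φ : ℕ → ℕ be an injective computable function whose range is not a computable (decidable) subset of ℕ. Then the real number x_A = Σ_{ℓ=0}^∞ 2^(−φ(ℓ)) is left-computable but not right-computable. -/
open Filter

/-- A real number `x` is left-computable (`Σ₁`) if it is the limit of a
monotonically nondecreasing computable sequence of rationals. -/
def LeftComputable (x : ℝ) : Prop :=
  ∃ q : ℕ → ℚ, Computable q ∧ (∀ n, q n ≤ q (n + 1)) ∧
    Tendsto (fun n => (q n : ℝ)) atTop (nhds x)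

/-- A real number `x` is right-computable (`Π₁`) if it is the limit of a
monotonically nonincreasing computable sequence of rationals. -/
def RightComputable (x : ℝ) : Prop :=
  ∃ q : ℕ → ℚ, Computable q ∧ (∀ n, q (n + 1) ≤ q n) ∧
    Tendsto (fun n => (q n : ℝ)) atTop (nhds x)

/-!
Let `w` be a positive computable weight, such as `w n = 2⁻ⁿ`. The partial sums of
`x = ∑ ℓ, w (φ ℓ)` approximate `x` from below. If `x` were also right-computable, one could search,
for each `n`, for a stage `m` at which the upper approximation of `x` exceeds the `m`-th partial sum
by less than `w n`. No term of index at least `m` can then be as large as `w n`, so `n` lies in the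
range of `φ` if and only if it is one of the finitely many values `φ 0, …, φ (m - 1)`, and the range
of `φ` would be decidable.

Carrying this out requires computing with rationals. Mathlib numbers the rational `a / d` by the
rank of its code `⟨a, d⟩` among the codes of all reduced fractions. That set of codes is decidable,
so the code, and with it the numerator and the denominator, can be recovered from the rank.
-/

section Computability

variable {α β : Type*} [Primcodable α] [Primcodable β]

theorem computablePred_comp {p : β → Prop} {f : α → β} (hp : ComputablePred p)
    (hf : Computable f) : ComputablePred fun a => p (f a) := by
  classical exact (hp.decide.comp hf).computablePred

theorem computablePred_and {p q : α → Prop} (hp : ComputablePred p) (hq : ComputablePred q) :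
    ComputablePred fun a => p a ∧ q a := by
  classical
  exact ((Primrec.and.to_comp.comp hp.decide hq.decide).of_eq fun a => by simp).computablePred

theorem computablePred_eq {f g : α → β} (hf : Computable f) (hg : Computable g) :
    ComputablePred fun a => f a = g a :=
  computablePred_comp (p := fun y : β × β => y.1 = y.2)
    (Primrec.eq (α := β)).computablePred (hf.pair hg)

theorem computable_of_computablePred_graph {δ : Type*} [Denumerable δ] {f : α → δ}
    (h : ComputablePred fun p : α × δ => p.2 = f p.1) : Computable f := by
  classical
  have hcode : ∀ a, ∃ k, Denumerable.ofNat δ k = f a :=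
    fun a => ⟨Encodable.encode (f a), Denumerable.ofNat_encode _⟩
  have hfind : Computable fun a => Nat.find (hcode a) :=
    Computable.find (P := fun a k => Denumerable.ofNat δ k = f a)
      (computablePred_comp h (Computable.fst.pair ((Computable.ofNat δ).comp Computable.snd))) hcode
  exact ((Computable.ofNat δ).comp hfind).of_eq fun a => Nat.find_spec (hcode a)

theorem computable_nat_count {p : α → ℕ → Prop} [∀ a, DecidablePred (p a)]
    (hp : ComputablePred fun x : α × ℕ => p x.1 x.2) :
    Computable₂ fun a n => Nat.count (p a) n := by
  have hstep : Computable₂ fun (x : α × ℕ) (y : ℕ × ℕ) =>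
      bif decide (p x.1 y.1) then y.2 + 1 else y.2 := by
    have hcount : Computable fun z : (α × ℕ) × ℕ × ℕ => z.2.2 := Computable.snd.comp Computable.snd
    exact (hp.decide.comp ((Computable.fst.comp Computable.fst).pair
      (Computable.fst.comp Computable.snd))).cond (Computable.succ.comp hcount) hcount
  refine (Computable.nat_rec Computable.snd (Computable.const 0) hstep).of_eq fun ⟨a, n⟩ => ?_
  induction n with
  | zero => rfl
  | succ n ih =>
    simp only [Bool.cond_decide] at ih ⊢
    rw [ih, Nat.count_succ]
    split_ifs <;> rfl

theorem computablePred_exists_lt {p : α → ℕ → Prop} (hp : ComputablePred fun x : α × ℕ => p x.1 x.2)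
    {b : α → ℕ} (hb : Computable b) : ComputablePred fun a => ∃ k < b a, p a k := by
  classical
  have hcount : Computable fun a => Nat.count (p a) (b a) :=
    (computable_nat_count hp).comp Computable.id hb
  exact (computablePred_eq hcount (Computable.const 0)).not.of_eq fun a => Nat.count_ne_iff_exists

theorem computablePred_mem_range {φ : ℕ → α} (hφ : Computable φ) {b : α → ℕ} (hb : Computable b)
    (hlt : ∀ ℓ, ℓ < b (φ ℓ)) : ComputablePred (· ∈ Set.range φ) := by
  refine (computablePred_exists_lt (p := fun a ℓ => φ ℓ = a)
    (computablePred_eq (hφ.comp Computable.snd) Computable.fst) hb).of_eq fun a => ?_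
  constructor
  · rintro ⟨ℓ, -, hℓ⟩
    exact ⟨ℓ, hℓ⟩
  · rintro ⟨ℓ, rfl⟩
    exact ⟨ℓ, hlt ℓ, rfl⟩

end Computability

section PrimrecNat

theorem primrec_nat_pow : Primrec₂ ((· ^ ·) : ℕ → ℕ → ℕ) :=
  Primrec₂.unpaired'.1 Nat.Primrec.pow

theorem coprime_iff_forall_lt {a b : ℕ} :
    a.Coprime b ↔ ∀ d < a + b + 1, d ∣ a ∧ d ∣ b → d = 1 := by
  refine ⟨fun h d _ hd => Nat.eq_one_of_dvd_coprimes h hd.1 hd.2, fun h => ?_⟩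
  refine h (a.gcd b) (Nat.lt_succ_of_le ?_) ⟨Nat.gcd_dvd_left a b, Nat.gcd_dvd_right a b⟩
  rcases a.eq_zero_or_pos with rfl | ha
  · simp
  · exact (Nat.gcd_le_left b ha).trans (Nat.le_add_right a b)

theorem primrecRel_dvd : PrimrecRel ((· ∣ ·) : ℕ → ℕ → Prop) :=
  (Primrec.eq.comp (Primrec.nat_mod.comp Primrec.snd Primrec.fst) (Primrec.const 0)).of_eq
    fun _ => Nat.dvd_iff_mod_eq_zero.symm

theorem primrecRel_coprime : PrimrecRel Nat.Coprime := by
  have hdvd : PrimrecRel fun (d : ℕ) (p : ℕ × ℕ) => ¬ (d ∣ p.1 ∧ d ∣ p.2) ∨ d = 1 :=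
    ((primrecRel_dvd.comp Primrec.fst (Primrec.fst.comp Primrec.snd)).and
      (primrecRel_dvd.comp Primrec.fst (Primrec.snd.comp Primrec.snd))).not.or
      (Primrec.eq.comp Primrec.fst (Primrec.const 1))
  refine (hdvd.forall_mem_list.comp (Primrec.list_range.comp
    (Primrec.succ.comp Primrec.nat_add)) Primrec.id).of_eq fun p => ?_
  simp only [← imp_iff_not_or, List.mem_range, id, coprime_iff_forall_lt, Nat.succ_eq_add_one]

end PrimrecNat

section PrimrecInt

theorem primrec_intEquivNatSumNat : Primrec Equiv.intEquivNatSumNat :=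
  Primrec.encode_iff.1 (Primrec.encode.of_eq fun z => by cases z <;> rfl)

theorem primrec_int_ofNat : Primrec Int.ofNat :=
  Primrec.encode_iff.1 (Primrec.nat_double.of_eq fun _ => rfl)

theorem primrec_int_negSucc : Primrec Int.negSucc :=
  Primrec.encode_iff.1 (Primrec.nat_double_succ.of_eq fun _ => rfl)

theorem primrec_int_toNat : Primrec Int.toNat :=
  (Primrec.sumCasesOn primrec_intEquivNatSumNat Primrec₂.right (Primrec₂.const 0)).of_eq
    fun z => by cases z <;> rfl

theorem primrec_int_toNat_neg : Primrec fun z : ℤ => (-z).toNat :=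
  (Primrec.sumCasesOn primrec_intEquivNatSumNat (Primrec₂.const 0)
    (Primrec.succ.comp₂ Primrec₂.right)).of_eq fun z => by
      cases z with
      | ofNat n => exact (Int.toNat_neg_natCast n).symm
      | negSucc n => rfl

theorem primrec_int_natAbs : Primrec Int.natAbs :=
  (Primrec.nat_add.comp primrec_int_toNat primrec_int_toNat_neg).of_eq fun z => by omega

theorem primrec_int_subNatNat : Primrec₂ Int.subNatNat :=
  (Primrec.nat_casesOn (Primrec.nat_sub.comp Primrec.snd Primrec.fst)
    (primrec_int_ofNat.comp (Primrec.nat_sub.comp Primrec.fst Primrec.snd))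
    (primrec_int_negSucc.comp₂ Primrec₂.right)).of_eq fun p => by
      rw [Int.subNatNat]
      cases p.2 - p.1 <;> rfl

theorem primrec_int_add : Primrec₂ ((· + ·) : ℤ → ℤ → ℤ) := by
  have hpos := Primrec.nat_add.comp₂ (primrec_int_toNat.comp₂ Primrec₂.left)
    (primrec_int_toNat.comp₂ Primrec₂.right)
  have hneg := Primrec.nat_add.comp₂ (primrec_int_toNat_neg.comp₂ Primrec₂.left)
    (primrec_int_toNat_neg.comp₂ Primrec₂.right)
  refine (primrec_int_subNatNat.comp₂ hpos hneg).of_eq fun a b => ?_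
  rw [Int.subNatNat_eq_coe]
  omega

theorem primrec_int_mul : Primrec₂ ((· * ·) : ℤ → ℤ → ℤ) := by
  have hmul {f g : ℤ → ℕ} (hf : Primrec f) (hg : Primrec g) :
      Primrec₂ fun a b => f a * g b :=
    Primrec.nat_mul.comp₂ (hf.comp₂ Primrec₂.left) (hg.comp₂ Primrec₂.right)
  have hpos := Primrec.nat_add.comp₂ (hmul primrec_int_toNat primrec_int_toNat)
    (hmul primrec_int_toNat_neg primrec_int_toNat_neg)
  have hneg := Primrec.nat_add.comp₂ (hmul primrec_int_toNat primrec_int_toNat_neg)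
    (hmul primrec_int_toNat_neg primrec_int_toNat)
  refine (primrec_int_subNatNat.comp₂ hpos hneg).of_eq fun a b => ?_
  rw [Int.subNatNat_eq_coe]
  conv_rhs => rw [← Int.toNat_sub_toNat_neg a, ← Int.toNat_sub_toNat_neg b]
  push_cast
  ring

theorem primrecRel_int_lt : PrimrecRel ((· < ·) : ℤ → ℤ → Prop) := by
  have hcross {f g : ℤ × ℤ → ℤ} (hf : Primrec f) (hg : Primrec g) :
      Primrec fun p => (f p).toNat + (-g p).toNat :=
    Primrec.nat_add.comp (primrec_int_toNat.comp hf) (primrec_int_toNat_neg.comp hg)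
  exact (Primrec.nat_lt.comp (hcross Primrec.fst Primrec.snd)
    (hcross Primrec.snd Primrec.fst)).of_eq fun p => by omega

end PrimrecInt

section ComputableRat

open Encodable Denumerable

theorem encode_ofEncodableOfInfinite {δ : Type*} [E : Encodable δ] [Infinite δ]
    [DecidablePred (· ∈ Set.range E.encode)] (a : δ) :
    (ofEncodableOfInfinite δ).encode a = Nat.count (· ∈ Set.range E.encode) (E.encode a) := by
  trans @Nat.count (· ∈ Set.range E.encode) (decidableRangeEncode δ) (E.encode a)
  · -- The rank function in `Nat.Subtype.denumerable` is private, so no lemma can unfold it.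
    with_unfolding_all rfl
  · congr!

theorem computable_encode_ofEncodableOfInfinite {δ : Type*} [E : Encodable δ] [Infinite δ]
    (h : ComputablePred (· ∈ Set.range E.encode)) :
    @Computable δ ℕ (@Primcodable.ofDenumerable δ (ofEncodableOfInfinite δ)) _ E.encode := by
  classical
  let _ : Denumerable δ := ofEncodableOfInfinite δ
  have hrank : Computable fun m => Nat.count (· ∈ Set.range E.encode) m :=
    (computable_nat_count (p := fun _ : Unit => (· ∈ Set.range E.encode))
      (computablePred_comp h Computable.snd)).comp (Computable.const ()) Computable.id
  refine computable_of_computablePred_graph ((computablePred_and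
    (computablePred_comp h Computable.snd) (computablePred_eq (hrank.comp Computable.snd)
      (Computable.encode.comp Computable.fst))).of_eq fun ⟨a, m⟩ => ?_)
  constructor
  · rintro ⟨hm, hcount⟩
    exact Nat.count_injective hm ⟨a, rfl⟩ (hcount.trans (encode_ofEncodableOfInfinite a))
  · rintro (rfl : m = E.encode a)
    exact ⟨⟨a, rfl⟩, (encode_ofEncodableOfInfinite a).symm⟩

-- `Rat.instEncodable` is not the encoding behind `Primcodable ℚ`, which is the rank of this one.
theorem rat_encode (q : ℚ) : Rat.instEncodable.encode q = Nat.pair (encode q.num) q.den := rfl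

theorem mem_range_rat_encode {m : ℕ} : m ∈ Set.range Rat.instEncodable.encode ↔
    0 < m.unpair.2 ∧ (ofNat ℤ m.unpair.1).natAbs.Coprime m.unpair.2 := by
  constructor
  · rintro ⟨q, rfl⟩
    simpa only [rat_encode, Nat.unpair_pair, ofNat_encode] using ⟨q.den_pos, q.reduced⟩
  · rintro ⟨hpos, hcop⟩
    refine ⟨⟨ofNat ℤ m.unpair.1, m.unpair.2, hpos.ne', hcop⟩, ?_⟩
    rw [rat_encode, encode_ofNat, Nat.pair_unpair]

theorem computable_rat_encode : Computable Rat.instEncodable.encode := by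
  have hfst : Primrec fun m : ℕ => m.unpair.1 := Primrec.fst.comp Primrec.unpair
  have hsnd : Primrec fun m : ℕ => m.unpair.2 := Primrec.snd.comp Primrec.unpair
  refine computable_encode_ofEncodableOfInfinite (PrimrecPred.computablePred
    (((Primrec.nat_lt.comp (Primrec.const 0) hsnd).and (primrecRel_coprime.comp
      (primrec_int_natAbs.comp ((Primrec.ofNat ℤ).comp hfst)) hsnd)).of_eq fun m => ?_))
  exact mem_range_rat_encode.symm

theorem computable_rat_num : Computable Rat.num :=
  ((Computable.ofNat ℤ).comp (Computable.fst.comp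
    (Computable.unpair.comp computable_rat_encode))).of_eq fun q => by
      rw [rat_encode, Nat.unpair_pair, ofNat_encode]

theorem computable_rat_den : Computable Rat.den :=
  (Computable.snd.comp (Computable.unpair.comp computable_rat_encode)).of_eq fun q => by
    rw [rat_encode, Nat.unpair_pair]

theorem eq_mkRat_iff {q : ℚ} {n : ℤ} {d : ℕ} :
    q = mkRat n d ↔ d = 0 ∧ q.num = 0 ∨ d ≠ 0 ∧ q.num * d = n * q.den := by
  rcases eq_or_ne d 0 with rfl | hd
  · simp
  · conv_lhs => rw [← Rat.mkRat_self q, Rat.mkRat_eq_iff q.den_nz hd]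
    simp [hd]

theorem computable_mkRat : Computable₂ mkRat := by
  have hprim : PrimrecPred fun x : (ℤ × ℕ) × ℤ × ℕ =>
      x.2.2 = 0 ∧ x.1.1 = 0 ∨ x.2.2 ≠ 0 ∧ x.1.1 * x.2.2 = x.2.1 * x.1.2 := by
    have hnum : Primrec fun x : (ℤ × ℕ) × ℤ × ℕ => x.1.1 := Primrec.fst.comp Primrec.fst
    have hden : Primrec fun x : (ℤ × ℕ) × ℤ × ℕ => x.1.2 := Primrec.snd.comp Primrec.fst
    have hn : Primrec fun x : (ℤ × ℕ) × ℤ × ℕ => x.2.1 := Primrec.fst.comp Primrec.snd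
    have hd : Primrec fun x : (ℤ × ℕ) × ℤ × ℕ => x.2.2 := Primrec.snd.comp Primrec.snd
    have hd0 := Primrec.eq.comp hd (Primrec.const 0)
    exact (hd0.and (Primrec.eq.comp hnum (Primrec.const 0))).or
      (hd0.not.and (Primrec.eq.comp (primrec_int_mul.comp hnum (primrec_int_ofNat.comp hd))
        (primrec_int_mul.comp hn (primrec_int_ofNat.comp hden))))
  have hfrac : Computable fun p : (ℤ × ℕ) × ℚ => (p.2.num, p.2.den) :=
    (computable_rat_num.comp Computable.snd).pair (computable_rat_den.comp Computable.snd)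
  exact computable_of_computablePred_graph ((computablePred_comp hprim.computablePred
    (hfrac.pair Computable.fst)).of_eq fun p => eq_mkRat_iff.symm)

theorem computable_rat_num_mul_den :
    Computable₂ fun p q : ℚ => p.num * (q.den : ℤ) :=
  primrec_int_mul.to_comp.comp (computable_rat_num.comp Computable.fst)
    (primrec_int_ofNat.to_comp.comp (computable_rat_den.comp Computable.snd))

theorem computable_rat_add : Computable₂ ((· + ·) : ℚ → ℚ → ℚ) := by
  have hnum : Computable₂ fun p q : ℚ => p.num * (q.den : ℤ) + q.num * (p.den : ℤ) :=
    primrec_int_add.to_comp.comp computable_rat_num_mul_den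
      (computable_rat_num_mul_den.comp Computable.snd Computable.fst)
  have hden : Computable₂ fun p q : ℚ => p.den * q.den :=
    Primrec.nat_mul.to_comp.comp (computable_rat_den.comp Computable.fst)
      (computable_rat_den.comp Computable.snd)
  exact (computable_mkRat.comp hnum hden).of_eq fun p => (Rat.add_def' p.1 p.2).symm

theorem computablePred_rat_lt : ComputablePred fun p : ℚ × ℚ => p.1 < p.2 :=
  (computablePred_comp (p := fun z : ℤ × ℤ => z.1 < z.2) primrecRel_int_lt.computablePred
    (computable_rat_num_mul_den.pair (computable_rat_num_mul_den.comp Computable.snd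
      Computable.fst))).of_eq fun p => (Rat.lt_iff p.1 p.2).symm

theorem computable_rat_sum_range {a : ℕ → ℚ} (ha : Computable a) :
    Computable fun n => ∑ ℓ ∈ Finset.range n, a ℓ := by
  have hstep : Computable₂ fun (_ : ℕ) (y : ℕ × ℚ) => y.2 + a y.1 :=
    computable_rat_add.comp (Computable.snd.comp Computable.snd)
      (ha.comp (Computable.fst.comp Computable.snd))
  refine (Computable.nat_rec Computable.id (Computable.const 0) hstep).of_eq fun n => ?_
  induction n with
  | zero => rfl
  | succ n ih => exact (congrArg (· + a n) ih).trans (Finset.sum_range_succ a n).symm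

theorem computable_rat_inv_two_pow : Computable fun n : ℕ => ((2 : ℚ) ^ n)⁻¹ :=
  (computable_mkRat.comp (Computable.const 1)
    (primrec_nat_pow.to_comp.comp (Computable.const 2) Computable.id)).of_eq fun n => by
      simp [Rat.mkRat_eq_div]

end ComputableRat

section LimitsOfRationals

variable {α : Type*} [Primcodable α]

theorem exists_computable_lt_add {p q : ℕ → ℚ} {ε : α → ℚ} {x : ℝ} (hp : Computable p)
    (hq : Computable q) (hε : Computable ε) (hpos : ∀ a, 0 < ε a)
    (hpx : Tendsto (fun n => (p n : ℝ)) atTop (nhds x))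
    (hqx : Tendsto (fun n => (q n : ℝ)) atTop (nhds x)) :
    ∃ m : α → ℕ, Computable m ∧ ∀ a, q (m a) < p (m a) + ε a := by
  have hex : ∀ a, ∃ n, q n < p n + ε a := fun a => by
    have hlim : Tendsto (fun n => (p n : ℝ) + ε a) atTop (nhds (x + ε a)) := hpx.add_const _
    have hlt : x < x + ε a := lt_add_of_pos_right x (by exact_mod_cast hpos a)
    obtain ⟨n, hn⟩ := (hqx.eventually_lt hlim hlt).exists
    exact ⟨n, by exact_mod_cast hn⟩
  have hdec : ComputablePred fun y : α × ℕ => q y.2 < p y.2 + ε y.1 :=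
    computablePred_comp computablePred_rat_lt ((hq.comp Computable.snd).pair
      (computable_rat_add.comp (hp.comp Computable.snd) (hε.comp Computable.fst)))
  exact ⟨fun a => Nat.find (hex a), Computable.find (P := fun a n => q n < p n + ε a) hdec hex,
    fun a => Nat.find_spec (hex a)⟩

theorem tendsto_rat_sum_range {a : ℕ → ℚ} (hsum : Summable fun ℓ => (a ℓ : ℝ)) :
    Tendsto (fun n => ((∑ ℓ ∈ Finset.range n, a ℓ : ℚ) : ℝ)) atTop (nhds (∑' ℓ, (a ℓ : ℝ))) := by
  simpa only [Rat.cast_sum] using hsum.hasSum.tendsto_sum_nat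

theorem leftComputable_tsum {a : ℕ → ℚ} (ha : Computable a) (hnonneg : ∀ ℓ, 0 ≤ a ℓ)
    (hsum : Summable fun ℓ => (a ℓ : ℝ)) : LeftComputable (∑' ℓ, (a ℓ : ℝ)) := by
  refine ⟨_, computable_rat_sum_range ha, fun n => ?_, tendsto_rat_sum_range hsum⟩
  rw [Finset.sum_range_succ]
  exact le_add_of_nonneg_right (hnonneg n)

theorem sum_range_add_le_tsum {a : ℕ → ℝ} (hnonneg : ∀ ℓ, 0 ≤ a ℓ) (hsum : Summable a) {m ℓ : ℕ}
    (hℓ : m ≤ ℓ) : ∑ k ∈ Finset.range m, a k + a ℓ ≤ ∑' k, a k := by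
  rw [add_comm, ← Finset.sum_insert (by simpa using hℓ)]
  exact hsum.sum_le_tsum _ fun k _ => hnonneg k

theorem exists_computable_forall_ge_lt {a : ℕ → ℚ} {ε : α → ℚ} (ha : Computable a)
    (hnonneg : ∀ ℓ, 0 ≤ a ℓ) (hsum : Summable fun ℓ => (a ℓ : ℝ))
    (hright : RightComputable (∑' ℓ, (a ℓ : ℝ))) (hε : Computable ε) (hpos : ∀ b, 0 < ε b) :
    ∃ m : α → ℕ, Computable m ∧ ∀ b, ∀ ℓ ≥ m b, a ℓ < ε b := by
  obtain ⟨q, hq, hqanti, hqx⟩ := hright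
  obtain ⟨m, hm, hgap⟩ := exists_computable_lt_add (computable_rat_sum_range ha) hq hε hpos
    (tendsto_rat_sum_range hsum) hqx
  refine ⟨m, hm, fun b ℓ hℓ => ?_⟩
  have hupper : ∑' ℓ, (a ℓ : ℝ) ≤ q (m b) := by
    have hanti : Antitone fun n => (q n : ℝ) :=
      antitone_nat_of_succ_le fun n => by exact_mod_cast hqanti n
    exact hanti.le_of_tendsto hqx (m b)
  have hterm : ∑ k ∈ Finset.range (m b), a k + a ℓ ≤ q (m b) := by
    exact_mod_cast (sum_range_add_le_tsum (fun k => by exact_mod_cast hnonneg k) hsum hℓ).trans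
      hupper
  exact lt_of_add_lt_add_left (hterm.trans_lt (hgap b))

end LimitsOfRationals

theorem stmt1_general {α : Type*} [Primcodable α] {w : α → ℚ} (hw : Computable w)
    (hpos : ∀ a, 0 < w a) {φ : ℕ → α} (hcomp : Computable φ)
    (hsum : Summable fun ℓ => (w (φ ℓ) : ℝ))
    (hrange : ¬ ComputablePred (fun a => a ∈ Set.range φ)) :
    LeftComputable (∑' ℓ, (w (φ ℓ) : ℝ)) ∧ ¬ RightComputable (∑' ℓ, (w (φ ℓ) : ℝ)) := by
  have hterm : Computable fun ℓ => w (φ ℓ) := hw.comp hcomp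
  have hnonneg : ∀ ℓ, 0 ≤ w (φ ℓ) := fun ℓ => (hpos _).le
  refine ⟨leftComputable_tsum hterm hnonneg hsum, fun hright => hrange ?_⟩
  obtain ⟨m, hm, hlt⟩ := exists_computable_forall_ge_lt hterm hnonneg hsum hright hw hpos
  exact computablePred_mem_range hcomp hm fun ℓ =>
    lt_of_not_ge fun hge => (hlt (φ ℓ) ℓ hge).false

/-- If `φ : ℕ → ℕ` is an injective computable function whose range is not a
computable (decidable) subset of `ℕ`, then `∑ ℓ, 2^(-φ ℓ)` is left-computable but
not right-computable. -/
theorem stmt1 (φ : ℕ → ℕ) (hinj : Function.Injective φ) (hcomp : Computable φ)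
    (hrange : ¬ ComputablePred (fun n => n ∈ Set.range φ)) :
    LeftComputable (∑' ℓ : ℕ, (2 : ℝ) ^ (-(φ ℓ : ℤ))) ∧
    ¬ RightComputable (∑' ℓ : ℕ, (2 : ℝ) ^ (-(φ ℓ : ℤ))) := by
  simpa using stmt1_general computable_rat_inv_two_pow (fun n => by positivity) hcomp
    (by simpa [Function.comp_def] using summable_geometric_two.comp_injective hinj) hrange
end

section
/- Let g : ℝ → ℝ be the trapezoid function, define Ψ(u) := 2·∫₁⁴ log₂(u+α) g(α) dα for u ≥ 0, let w_n ≥ 0 with Σ_{n=1}^∞ w_n = 1, let u_n ≥ 0, and define f(α) = Σ_{n=1}^∞ w_n · g(|α| − u_n). If Σ_{n=1}^∞ w_n · Ψ(u_n) < ∞, then the function α ↦ log₂(α²)·f(α) is integrable on ℝ and ∫_ℝ log₂(α²) f(α) dα = 2·Σ_{n=1}^∞ w_n · Ψ(u_n). -/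
/-!
For `u ≥ 0` the function `x ↦ log₂(x²) g(|x| - u)` is nonnegative, because `g(|x| - u)` vanishes
for `|x| ≤ 1`. It is even, so the shift `x = u + α` shows that its integral is `2 Ψ(u)`. Hence the
`L¹` norms of the terms of `∑ wₙ log₂(x²) g(|x| - uₙ)` are `2 |wₙ Ψ(uₙ)|`. They are summable, so the
series converges in `L¹` and almost everywhere, and may be integrated term by term.
-/

open Filter MeasureTheory intervalIntegral

/-- The trapezoid function `g`: it vanishes outside `[1,4]`, rises linearly from `0`
to `1/4` on `[1,2]`, equals `1/4` on `[2,3]`, and falls linearly back to `0` on `[3,4]`. -/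
noncomputable def trap (α : ℝ) : ℝ :=
  if α < 1 then 0
  else if α ≤ 2 then (α - 1) / 4
  else if α < 3 then 1 / 4
  else if α ≤ 4 then (4 - α) / 4
  else 0

/-- `Ψ(u) = 2 ∫₁⁴ log₂(u+α) g(α) dα`. -/
noncomputable def Psi (u : ℝ) : ℝ :=
  2 * ∫ α in (1 : ℝ)..4, Real.logb 2 (u + α) * trap α

section Series

variable {ι X : Type*} {_ : MeasurableSpace X} {μ : Measure X}

lemma integrable_tsum_of_summable_integral_norm {E : Type*} [NormedAddCommGroup E] [CompleteSpace E]
    [Countable ι] {F : ι → X → E} (hF_int : ∀ i, Integrable (F i) μ)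
    (hF_sum : Summable fun i => ∫ x, ‖F i x‖ ∂μ) :
    Integrable (fun x => ∑' i, F i x) μ := by
  have norm_toL1 (i : ι) : ‖(hF_int i).toL1 (F i)‖ = ∫ x, ‖F i x‖ ∂μ :=
    L1.norm_of_fun_eq_integral_norm (hF_int i)
  have hsum : ∑' i, ‖(hF_int i).toL1 (F i)‖ₑ ≠ ⊤ := by
    rw [tsum_enorm_ne_top_iff_summable_norm]
    simpa only [norm_toL1] using hF_sum
  refine (L1.integrable_coeFn (∑' i, (hF_int i).toL1 (F i))).congr ?_
  filter_upwards [Lp.coeFn_tsum hsum, ae_all_iff.2 fun i => (hF_int i).coeFn_toL1] with x hx hF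
  simp only [hx, hF]

lemma summable_integral_norm_const_mul {c : ι → ℝ} {φ : ι → X → ℝ} (hφ : ∀ i, 0 ≤ φ i)
    (h : Summable fun i => c i * ∫ x, φ i x ∂μ) :
    Summable fun i => ∫ x, ‖c i * φ i x‖ ∂μ := by
  have integral_norm (i : ι) : ∫ x, ‖c i * φ i x‖ ∂μ = ‖c i * ∫ x, φ i x ∂μ‖ := by
    simp_rw [norm_mul, Real.norm_of_nonneg (hφ i _)]
    rw [MeasureTheory.integral_const_mul, Real.norm_of_nonneg (integral_nonneg (hφ i))]
  simpa only [integral_norm] using h.norm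

end Series

lemma integral_comp_abs_sub {F : ℝ → ℝ} {u : ℝ} (hF : ∀ x ≤ -u, F x = 0) :
    ∫ x, F (|x| - u) = 2 * ∫ x, F x := by
  rw [integral_comp_abs (f := fun x => F (x - u)), setIntegral_eq_integral_of_forall_compl_eq_zero,
    integral_sub_right_eq_self]
  intro x hx
  exact hF _ (by linarith [Set.notMem_Ioi.1 hx])

lemma locallyIntegrable_log : LocallyIntegrable Real.log := fun x =>
  ⟨Set.Ioc (x - 1) (x + 1), Ioc_mem_nhds (by linarith) (by linarith), intervalIntegrable_log'.1⟩

lemma locallyIntegrable_logb_sq (b : ℝ) : LocallyIntegrable fun x => Real.logb b (x ^ 2) := by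
  refine (locallyIntegrable_log.smul (2 / Real.log b)).congr (.of_forall fun x => ?_)
  simp only [Real.logb, Real.log_pow, Pi.smul_apply, smul_eq_mul, Nat.cast_ofNat]
  ring

lemma trap_eq_max_min (x : ℝ) :
    trap x = max 0 (min (1 / 4) (min ((x - 1) / 4) ((4 - x) / 4))) := by
  simp only [trap, max_def, min_def]
  split_ifs <;> linarith

lemma continuous_trap : Continuous trap := by
  rw [funext trap_eq_max_min]
  fun_prop

lemma trap_nonneg (x : ℝ) : 0 ≤ trap x := by
  rw [trap_eq_max_min]
  exact le_max_left _ _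

lemma trap_eq_zero_of_le_one {x : ℝ} (hx : x ≤ 1) : trap x = 0 := by
  unfold trap
  grind

lemma trap_eq_zero_of_four_le {x : ℝ} (hx : 4 ≤ x) : trap x = 0 := by
  unfold trap
  grind

lemma hasCompactSupport_trap_abs_sub (u : ℝ) : HasCompactSupport fun x => trap (|x| - u) := by
  refine .intro (isCompact_closedBall 0 (u + 4)) fun x hx => trap_eq_zero_of_four_le ?_
  rw [mem_closedBall_zero_iff, Real.norm_eq_abs] at hx
  linarith

lemma integrable_logb_sq_mul_trap_abs_sub (b u : ℝ) :
    Integrable fun x => Real.logb b (x ^ 2) * trap (|x| - u) :=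
  (locallyIntegrable_logb_sq b).integrable_smul_right_of_hasCompactSupport
    (continuous_trap.comp (by fun_prop)) (hasCompactSupport_trap_abs_sub u)

lemma logb_sq_mul_trap_abs_sub_nonneg {b u : ℝ} (hb : 1 < b) (hu : 0 ≤ u) (x : ℝ) :
    0 ≤ Real.logb b (x ^ 2) * trap (|x| - u) := by
  rcases le_total |x| 1 with hx | hx
  · rw [trap_eq_zero_of_le_one (by linarith), mul_zero]
  · exact mul_nonneg (Real.logb_nonneg hb ((one_le_sq_iff_one_le_abs x).2 hx)) (trap_nonneg _)

lemma Psi_eq_integral (u : ℝ) : Psi u = 2 * ∫ x, Real.logb 2 (u + x) * trap x := by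
  rw [Psi, integral_eq_integral_of_support_subset]
  intro x hx
  have hx_trap : trap x ≠ 0 := right_ne_zero_of_mul hx
  exact ⟨lt_of_not_ge (hx_trap ∘ trap_eq_zero_of_le_one),
    (lt_of_not_ge (hx_trap ∘ trap_eq_zero_of_four_le)).le⟩

lemma integral_logb_sq_mul_trap_abs_sub {u : ℝ} (hu : -1 ≤ u) :
    ∫ x, Real.logb 2 (x ^ 2) * trap (|x| - u) = 2 * Psi u :=
  calc
    ∫ x, Real.logb 2 (x ^ 2) * trap (|x| - u)
      = ∫ x, Real.logb 2 ((u + (|x| - u)) ^ 2) * trap (|x| - u) := by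
        simp only [add_sub_cancel, sq_abs]
    _ = 2 * ∫ x, Real.logb 2 ((u + x) ^ 2) * trap x :=
        integral_comp_abs_sub (F := fun x => Real.logb 2 ((u + x) ^ 2) * trap x) fun x hx => by
          rw [trap_eq_zero_of_le_one (by linarith), mul_zero]
    _ = 2 * Psi u := by
        simp_rw [Real.logb_pow, Nat.cast_ofNat, mul_assoc]
        rw [MeasureTheory.integral_const_mul, Psi_eq_integral]

theorem stmt10_general {ι : Type*} [Countable ι] {w u : ι → ℝ} (hu : ∀ i, 0 ≤ u i)
    (hPsiSum : Summable fun i => w i * Psi (u i)) :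
    Integrable (fun x => Real.logb 2 (x ^ 2) * ∑' i, w i * trap (|x| - u i)) ∧
    ∫ x, Real.logb 2 (x ^ 2) * ∑' i, w i * trap (|x| - u i) = 2 * ∑' i, w i * Psi (u i) := by
  let F (i : ι) (x : ℝ) : ℝ := Real.logb 2 (x ^ 2) * trap (|x| - u i)
  have series_eq (x : ℝ) :
      Real.logb 2 (x ^ 2) * ∑' i, w i * trap (|x| - u i) = ∑' i, w i * F i x := by
    simp only [← tsum_mul_left, F, mul_left_comm]
  have integral_F (i : ι) : ∫ x, F i x = 2 * Psi (u i) :=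
    integral_logb_sq_mul_trap_abs_sub (by linarith [hu i])
  have term_integrable (i : ι) : Integrable fun x => w i * F i x :=
    (integrable_logb_sq_mul_trap_abs_sub 2 (u i)).const_mul (w i)
  have norm_summable : Summable fun i => ∫ x, ‖w i * F i x‖ := by
    refine summable_integral_norm_const_mul
      (fun i => logb_sq_mul_trap_abs_sub_nonneg one_lt_two (hu i)) ?_
    simpa only [integral_F, mul_left_comm _ (2 : ℝ)] using hPsiSum.mul_left 2
  simp_rw [series_eq]
  refine ⟨integrable_tsum_of_summable_integral_norm term_integrable norm_summable, ?_⟩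
  rw [← integral_tsum_of_summable_integral_norm term_integrable norm_summable]
  simp_rw [MeasureTheory.integral_const_mul, integral_F, mul_left_comm _ (2 : ℝ), tsum_mul_left]

/-- If `wₙ ≥ 0` with `Σ_{n≥1} wₙ = 1`, `uₙ ≥ 0`, `f(α) = Σ_{n≥1} wₙ g(|α| - uₙ)`,
and `Σ_{n≥1} wₙ Ψ(uₙ) < ∞`, then `α ↦ log₂(α²) f(α)` is integrable and
`∫ log₂(α²) f(α) dα = 2 Σ_{n≥1} wₙ Ψ(uₙ)`. -/
theorem stmt10 (w u : ℕ → ℝ) (hw : ∀ n : ℕ, 1 ≤ n → 0 ≤ w n)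
    (hsum : HasSum (fun n : ℕ => w (n + 1)) 1)
    (hu : ∀ n : ℕ, 1 ≤ n → 0 ≤ u n)
    (f : ℝ → ℝ) (hf : ∀ α, f α = ∑' n : ℕ, w (n + 1) * trap (|α| - u (n + 1)))
    (hPsiSum : Summable (fun n : ℕ => w (n + 1) * Psi (u (n + 1)))) :
    Integrable (fun α => Real.logb 2 (α ^ 2) * f α) ∧
    (∫ α, Real.logb 2 (α ^ 2) * f α) = 2 * ∑' n : ℕ, w (n + 1) * Psi (u (n + 1)) := by
  obtain rfl : f = fun α => ∑' n : ℕ, w (n + 1) * trap (|α| - u (n + 1)) := funext hf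
  exact stmt10_general (fun n => hu (n + 1) n.succ_pos) hPsiSum
end

section
/- Let φ : ℕ → ℕ be injective and for each integer M ≥ 4 let K_M = ∫₀^∞ g_M(α) ln α dα. Then the series Σ_{M=4}^∞ 2^(−φ(M)) · g_M(α)/K_M converges uniformly on ℝ, its sum g* is continuous and nonnegative, g* vanishes on (−∞, 2], g* is integrable on [0, ∞), and ∫₀^∞ g*(α) dα > 0. -/
open Filter MeasureTheory

/-- For `M ≥ 4`, the function `g_M` from Lemma 1 of the paper. -/
noncomputable def gM (M : ℕ) (α : ℝ) : ℝ :=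
  if α ≤ 2 then 0
  else if α ≤ 3 then (α - 2) / (3 * (Real.log 3) ^ 2)
  else if α ≤ M then 1 / (α * (Real.log α) ^ 2)
  else if α ≤ M + 1 then ((M : ℝ) + 1 - α) / (M * (Real.log M) ^ 2)
  else 0

/-- `K_M = ∫₀^∞ g_M(α) ln α dα`. -/
noncomputable def Kconst (M : ℕ) : ℝ :=
  ∫ α in Set.Ioi (0 : ℝ), gM M α * Real.log α

/-!
On `(3, M)` the integrand of `K_M` is the derivative of `log ∘ log`, so `K_M ≥ log (log M / log 3)`.
As `g_M ≤ 1`, the functions `g_M / K_M` with `M ≥ 4` are uniformly bounded, and the Weierstrass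
M-test gives uniform convergence. Since `g_M` vanishes outside `(2, M + 1)`, where `log α ≥ log 2`,
also `∫ g_M ≤ K_M / log 2`: the integrals of `g_M / K_M` are uniformly bounded as well, so the
series may be integrated term by term.
-/

section GeneralLemmas

lemma one_lt_log_of_three_le {x : ℝ} (hx : 3 ≤ x) : 1 < Real.log x :=
  (Real.lt_log_iff_exp_lt (by linarith)).2 (Real.exp_one_lt_three.trans_le hx)

lemma integral_tsum_pos {ι X : Type*} [Countable ι] [MeasurableSpace X] {μ : Measure X}
    {f : ι → X → ℝ} (hf_nonneg : ∀ i x, 0 ≤ f i x) (hf_int : ∀ i, Integrable (f i) μ)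
    (hf_sum : Summable fun i ↦ ∫ x, f i x ∂μ) {i : ι} (hi : 0 < ∫ x, f i x ∂μ) :
    0 < ∫ x, ∑' i, f i x ∂μ := by
  have hf_norm : Summable fun i ↦ ∫ x, ‖f i x‖ ∂μ := by
    simpa only [Real.norm_of_nonneg (hf_nonneg _ _)] using hf_sum
  rw [← integral_tsum_of_summable_integral_norm hf_int hf_norm]
  exact hf_sum.tsum_pos (fun j ↦ integral_nonneg (hf_nonneg j)) i hi

lemma summable_two_zpow_neg_comp {ι : Type*} {ψ : ι → ℕ} (hψ : Function.Injective ψ) :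
    Summable fun i ↦ (2 : ℝ) ^ (-(ψ i : ℤ)) := by
  simpa [Function.comp_def] using summable_geometric_two.comp_injective hψ

end GeneralLemmas

section Bump

variable {M : ℕ}

lemma gM_of_le_two (M : ℕ) {α : ℝ} (hα : α ≤ 2) : gM M α = 0 := if_pos hα

lemma gM_of_mem_Ioc {α : ℝ} (hα : α ∈ Set.Ioc (3 : ℝ) M) :
    gM M α = 1 / (α * Real.log α ^ 2) := by
  have := hα.1
  rw [gM, if_neg (by linarith), if_neg (by linarith), if_pos hα.2]

lemma gM_three_pos (M : ℕ) : 0 < gM M 3 := by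
  have : 0 < Real.log 3 := Real.log_pos (by norm_num)
  rw [gM, if_neg (by norm_num), if_pos le_rfl]
  exact div_pos (by norm_num) (by positivity)

lemma gM_nonneg (M : ℕ) (α : ℝ) : 0 ≤ gM M α := by
  unfold gM
  split_ifs with h₂ h₃ hM hM'
  · exact le_rfl
  · exact div_nonneg (by linarith) (by positivity)
  · exact div_nonneg zero_le_one (mul_nonneg (by linarith) (sq_nonneg _))
  · exact div_nonneg (by linarith) (by positivity)
  · exact le_rfl

lemma gM_eq_trapezoid_div (hM : 3 ≤ M) (α : ℝ) :
    gM M α = max 0 (min 1 (min (α - 2) (M + 1 - α))) /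
      (max 3 (min α M) * Real.log (max 3 (min α M)) ^ 2) := by
  have : (3 : ℝ) ≤ M := by exact_mod_cast hM
  unfold gM
  split_ifs <;> grind

lemma gM_le_one (hM : 3 ≤ M) (α : ℝ) : gM M α ≤ 1 := by
  have hp : (3 : ℝ) ≤ max 3 (min α M) := le_max_left _ _
  have hlog := one_lt_log_of_three_le hp
  rw [gM_eq_trapezoid_div hM]
  refine div_le_one_of_le₀ ?_ (by positivity)
  calc max 0 (min 1 (min (α - 2) (M + 1 - α))) ≤ 1 := max_le zero_le_one (min_le_left _ _)
    _ ≤ max 3 (min α M) * Real.log (max 3 (min α M)) ^ 2 :=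
      one_le_mul_of_one_le_of_one_le (by linarith) (one_le_pow₀ hlog.le)

lemma continuous_gM (hM : 3 ≤ M) : Continuous (gM M) := by
  have hp (α : ℝ) : (3 : ℝ) ≤ max 3 (min α M) := le_max_left _ _
  have hlog (α : ℝ) : 0 < Real.log (max 3 (min α M)) :=
    zero_lt_one.trans (one_lt_log_of_three_le (hp α))
  rw [funext (gM_eq_trapezoid_div hM)]
  refine Continuous.div (by fun_prop) ?_ fun α ↦ ?_
  · fun_prop (disch := exact fun α ↦ by linarith [hp α])
  · have := hlog α
    positivity

lemma hasCompactSupport_gM (hM : 3 ≤ M) : HasCompactSupport (gM M) := by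
  refine .intro (isCompact_Icc (a := (2 : ℝ)) (b := M + 1)) fun α hα ↦ ?_
  rw [gM_eq_trapezoid_div hM]
  grind

lemma integrable_gM (hM : 3 ≤ M) : Integrable (gM M) :=
  (continuous_gM hM).integrable_of_hasCompactSupport (hasCompactSupport_gM hM)

lemma integral_gM_pos (hM : 3 ≤ M) : 0 < ∫ α, gM M α :=
  (continuous_gM hM).integral_pos_of_hasCompactSupport_nonneg_nonzero (hasCompactSupport_gM hM)
    (gM_nonneg M) (gM_three_pos M).ne'

end Bump

section LogMoment

variable {M : ℕ}

-- Truncating the logarithm where `gM M` vanishes makes the integrand visibly continuous.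
lemma gM_mul_log_eq (M : ℕ) (α : ℝ) :
    gM M α * Real.log α = gM M α * Real.log (max 2 α) := by
  rcases le_total α 2 with hα | hα
  · simp only [gM_of_le_two M hα, zero_mul]
  · rw [max_eq_right hα]

lemma gM_mul_log_two_le (M : ℕ) (α : ℝ) : gM M α * Real.log 2 ≤ gM M α * Real.log α := by
  rw [gM_mul_log_eq]
  exact mul_le_mul_of_nonneg_left (Real.log_le_log two_pos (le_max_left _ _)) (gM_nonneg M α)

lemma gM_mul_log_nonneg (M : ℕ) (α : ℝ) : 0 ≤ gM M α * Real.log α :=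
  (mul_nonneg (gM_nonneg M α) (Real.log_nonneg one_le_two)).trans (gM_mul_log_two_le M α)

lemma integrable_gM_mul_log (hM : 3 ≤ M) : Integrable fun α ↦ gM M α * Real.log α := by
  have hlog : Continuous fun α : ℝ ↦ Real.log (max 2 α) :=
    (continuous_const.max continuous_id).log fun α ↦ (two_pos.trans_le (le_max_left _ _)).ne'
  rw [funext (gM_mul_log_eq M)]
  exact ((continuous_gM hM).mul hlog).integrable_of_hasCompactSupport
    (hasCompactSupport_gM hM).mul_right

lemma Kconst_eq_integral (M : ℕ) : Kconst M = ∫ α, gM M α * Real.log α := by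
  refine setIntegral_eq_integral_of_forall_compl_eq_zero fun α hα ↦ ?_
  rw [gM_of_le_two M ((not_lt.1 hα).trans two_pos.le), zero_mul]

lemma log_log_div_log_three_le_Kconst (hM : 3 ≤ M) :
    Real.log (Real.log M / Real.log 3) ≤ Kconst M := by
  have hM' : (3 : ℝ) ≤ M := by exact_mod_cast hM
  have hlog {x : ℝ} (hx : 3 ≤ x) : Real.log x ≠ 0 :=
    (zero_lt_one.trans (one_lt_log_of_three_le hx)).ne'
  have hmid : Set.EqOn (fun α ↦ α⁻¹ / Real.log α) (fun α ↦ gM M α * Real.log α)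
      (Set.Ioc (3 : ℝ) M) := fun α hα ↦ by
    have := hlog hα.1.le
    simp only [gM_of_mem_Ioc hα]
    field_simp
  calc Real.log (Real.log M / Real.log 3)
      = ∫ α in (3 : ℝ)..M, α⁻¹ / Real.log α := by
        rw [integral_inv_div_log (by norm_num) (by linarith),
          Real.log_div (hlog hM') (hlog le_rfl)]
    _ = ∫ α in Set.Ioc (3 : ℝ) M, gM M α * Real.log α := by
        rw [intervalIntegral.integral_of_le hM', setIntegral_congr_fun measurableSet_Ioc hmid]
    _ ≤ ∫ α, gM M α * Real.log α :=
        setIntegral_le_integral (integrable_gM_mul_log hM) (.of_forall (gM_mul_log_nonneg M))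
    _ = Kconst M := (Kconst_eq_integral M).symm

lemma log_log_four_div_log_three_pos : 0 < Real.log (Real.log 4 / Real.log 3) :=
  Real.log_pos ((one_lt_div (Real.log_pos (by norm_num))).2
    (Real.log_lt_log (by norm_num) (by norm_num)))

lemma log_log_four_div_log_three_le_Kconst (hM : 4 ≤ M) :
    Real.log (Real.log 4 / Real.log 3) ≤ Kconst M := by
  have hM' : (4 : ℝ) ≤ M := by exact_mod_cast hM
  have : 0 < Real.log 3 := Real.log_pos (by norm_num)
  have : 0 < Real.log 4 := Real.log_pos (by norm_num)
  refine le_trans ?_ (log_log_div_log_three_le_Kconst (by omega))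
  gcongr

lemma Kconst_pos (hM : 4 ≤ M) : 0 < Kconst M :=
  log_log_four_div_log_three_pos.trans_le (log_log_four_div_log_three_le_Kconst hM)

lemma integral_gM_mul_log_two_le_Kconst (hM : 3 ≤ M) :
    (∫ α, gM M α) * Real.log 2 ≤ Kconst M := by
  rw [Kconst_eq_integral, ← integral_mul_const]
  exact integral_mono ((integrable_gM hM).mul_const _) (integrable_gM_mul_log hM)
    (gM_mul_log_two_le M)

end LogMoment

/-- The normalized function `g_M / K_M`, whose weighted sums form the series `g*`. -/
noncomputable def normalizedG (M : ℕ) (α : ℝ) : ℝ := gM M α / Kconst M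

section NormalizedG

variable {M : ℕ}

lemma normalizedG_of_le_two (M : ℕ) {α : ℝ} (hα : α ≤ 2) : normalizedG M α = 0 := by
  rw [normalizedG, gM_of_le_two M hα, zero_div]

lemma normalizedG_nonneg (hM : 4 ≤ M) (α : ℝ) : 0 ≤ normalizedG M α :=
  div_nonneg (gM_nonneg M α) (Kconst_pos hM).le

lemma normalizedG_le (hM : 4 ≤ M) (α : ℝ) :
    normalizedG M α ≤ 1 / Real.log (Real.log 4 / Real.log 3) :=
  div_le_div₀ zero_le_one (gM_le_one (by omega) α) log_log_four_div_log_three_pos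
    (log_log_four_div_log_three_le_Kconst hM)

lemma continuous_normalizedG (hM : 3 ≤ M) : Continuous (normalizedG M) :=
  (continuous_gM hM).div_const _

lemma integrable_normalizedG (hM : 3 ≤ M) : Integrable (normalizedG M) :=
  (integrable_gM hM).div_const _

lemma integral_normalizedG_pos (hM : 4 ≤ M) : 0 < ∫ α, normalizedG M α := by
  simp only [normalizedG, integral_div]
  exact div_pos (integral_gM_pos (by omega)) (Kconst_pos hM)

lemma integral_normalizedG_le (hM : 4 ≤ M) : ∫ α, normalizedG M α ≤ 1 / Real.log 2 := by
  simp only [normalizedG, integral_div]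
  rw [div_le_div_iff₀ (Kconst_pos hM) (Real.log_pos one_lt_two), one_mul]
  exact integral_gM_mul_log_two_le_Kconst (by omega)

end NormalizedG

section WeightedSeries

variable {a : ℕ → ℝ}

lemma norm_mul_normalizedG_le (ha : ∀ k, 0 ≤ a k) (k : ℕ) (α : ℝ) :
    ‖a k * normalizedG (k + 4) α‖ ≤ a k * (1 / Real.log (Real.log 4 / Real.log 3)) := by
  have hk : 4 ≤ k + 4 := by omega
  rw [Real.norm_of_nonneg (mul_nonneg (ha k) (normalizedG_nonneg hk α))]
  exact mul_le_mul_of_nonneg_left (normalizedG_le hk α) (ha k)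

lemma tendstoUniformly_sum_mul_normalizedG (ha : ∀ k, 0 ≤ a k) (ha_sum : Summable a) :
    TendstoUniformly (fun N α ↦ ∑ k ∈ Finset.range N, a k * normalizedG (k + 4) α)
      (fun α ↦ ∑' k, a k * normalizedG (k + 4) α) atTop :=
  tendstoUniformly_tsum_nat (ha_sum.mul_right _) (norm_mul_normalizedG_le ha)

lemma continuous_tsum_mul_normalizedG (ha : ∀ k, 0 ≤ a k) (ha_sum : Summable a) :
    Continuous fun α ↦ ∑' k, a k * normalizedG (k + 4) α :=
  continuous_tsum (fun k ↦ continuous_const.mul (continuous_normalizedG (by omega)))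
    (ha_sum.mul_right _) (norm_mul_normalizedG_le ha)

lemma tsum_mul_normalizedG_nonneg (ha : ∀ k, 0 ≤ a k) (α : ℝ) :
    0 ≤ ∑' k, a k * normalizedG (k + 4) α :=
  tsum_nonneg fun k ↦ mul_nonneg (ha k) (normalizedG_nonneg (by omega) α)

lemma tsum_mul_normalizedG_of_le_two (a : ℕ → ℝ) {α : ℝ} (hα : α ≤ 2) :
    ∑' k, a k * normalizedG (k + 4) α = 0 := by
  simp only [normalizedG_of_le_two _ hα, mul_zero, tsum_zero]

lemma summable_integral_mul_normalizedG (ha : ∀ k, 0 ≤ a k) (ha_sum : Summable a) :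
    Summable fun k ↦ ∫ α, a k * normalizedG (k + 4) α := by
  simp only [integral_const_mul]
  have hk (k : ℕ) : 4 ≤ k + 4 := by omega
  exact .of_nonneg_of_le
    (fun k ↦ mul_nonneg (ha k) (integral_normalizedG_pos (hk k)).le)
    (fun k ↦ mul_le_mul_of_nonneg_left (integral_normalizedG_le (hk k)) (ha k))
    (ha_sum.mul_right _)

lemma integral_tsum_mul_normalizedG_pos (ha : ∀ k, 0 ≤ a k) (ha_sum : Summable a)
    (ha_pos : ∃ k, 0 < a k) : 0 < ∫ α, ∑' k, a k * normalizedG (k + 4) α := by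
  obtain ⟨k, hk⟩ := ha_pos
  refine integral_tsum_pos (fun j α ↦ mul_nonneg (ha j) (normalizedG_nonneg (by omega) α))
    (fun j ↦ (integrable_normalizedG (by omega)).const_mul _)
    (summable_integral_mul_normalizedG ha ha_sum) (i := k) ?_
  rw [integral_const_mul]
  exact mul_pos hk (integral_normalizedG_pos (by omega))

end WeightedSeries

theorem stmt18_general (a : ℕ → ℝ) (ha : ∀ k, 0 ≤ a k) (ha_sum : Summable a)
    (ha_pos : ∃ k, 0 < a k) (gstar : ℝ → ℝ)
    (hgstar : ∀ α, gstar α = ∑' k : ℕ, a k * gM (k + 4) α / Kconst (k + 4)) :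
    TendstoUniformly
      (fun N α ↦ ∑ k ∈ Finset.range N, a k * gM (k + 4) α / Kconst (k + 4)) gstar atTop ∧
    Continuous gstar ∧
    (∀ α, 0 ≤ gstar α) ∧
    (∀ α : ℝ, α ≤ 2 → gstar α = 0) ∧
    IntegrableOn gstar (Set.Ici (0 : ℝ)) ∧
    0 < ∫ α in Set.Ioi (0 : ℝ), gstar α := by
  simp only [mul_div_assoc] at hgstar ⊢
  obtain rfl : gstar = fun α ↦ ∑' k, a k * normalizedG (k + 4) α := funext hgstar
  have integral_pos := integral_tsum_mul_normalizedG_pos ha ha_sum ha_pos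
  refine ⟨tendstoUniformly_sum_mul_normalizedG ha ha_sum,
    continuous_tsum_mul_normalizedG ha ha_sum, tsum_mul_normalizedG_nonneg ha,
    fun α ↦ tsum_mul_normalizedG_of_le_two a, ?_, ?_⟩
  -- The Bochner integral of a non-integrable function is `0`.
  · exact (Integrable.of_integral_ne_zero integral_pos.ne').integrableOn
  · have eq_zero (α : ℝ) (hα : α ∉ Set.Ioi 0) : ∑' k, a k * normalizedG (k + 4) α = 0 :=
      tsum_mul_normalizedG_of_le_two a ((not_lt.1 hα).trans two_pos.le)
    exact integral_pos.trans_eq (setIntegral_eq_integral_of_forall_compl_eq_zero eq_zero).symm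

/-- For injective `φ`, the series `Σ_{M≥4} 2^{-φ(M)} g_M/K_M` converges uniformly
on `ℝ`; its sum `g*` is continuous, nonnegative, vanishes on `(-∞, 2]`, is
integrable on `[0,∞)`, and `∫₀^∞ g* > 0`. -/
theorem stmt18 (φ : ℕ → ℕ) (hinj : Function.Injective φ)
    (gstar : ℝ → ℝ)
    (hgstar : ∀ α, gstar α =
      ∑' k : ℕ, (2 : ℝ) ^ (-(φ (k + 4) : ℤ)) * gM (k + 4) α / Kconst (k + 4)) :
    TendstoUniformly
      (fun N α => ∑ k ∈ Finset.range N,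
        (2 : ℝ) ^ (-(φ (k + 4) : ℤ)) * gM (k + 4) α / Kconst (k + 4))
      gstar atTop ∧
    Continuous gstar ∧
    (∀ α, 0 ≤ gstar α) ∧
    (∀ α : ℝ, α ≤ 2 → gstar α = 0) ∧
    IntegrableOn gstar (Set.Ici (0 : ℝ)) ∧
    0 < ∫ α in Set.Ioi (0 : ℝ), gstar α :=
  stmt18_general _ (fun _ ↦ by positivity)
    (summable_two_zpow_neg_comp (hinj.comp (add_left_injective 4))) ⟨0, by positivity⟩ gstar hgstar
end
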